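/- Let Ω ⊆ ℝ^d be a bounded measurable set, let f : ℝ^d → ℝ be continuously differentiable with compact support, and let θ : ℝ^d → ℝ^d be continuously differentiable with compact support. Then the map t ↦ ∫_{Φ_t(Ω)} f(x) dx, where Φ_t(x) = x + t·θ(x), is differentiable at t = 0 and its derivative there equals ∫_Ω div(f·θ)(x) dx, where div(f·θ) = Σ_{i=1}^d ∂_i (f·θ_i). -/

import Mathlib

open MeasureTheory

/-!
For small `t` the map `x ↦ x + t • θ x` is injective on the compact set `closure Ω`, being a
perturbation of the identity by a map of Lipschitz constant `< 1`, and its Jacobian determinant is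
positive there. Changing variables turns the integral over the moving domain into
`∫ x in Ω, det (1 + t • Dθ x) • f (x + t • θ x)`, an integral over a fixed domain of a `C¹` function
of `t` and of the data `(x, θ x, Dθ x)`. These data range over a compact set, so one may
differentiate under the integral sign; since the derivative of `det` at the identity is the trace,
the result at `t = 0` is `div θ • f + Df θ`, which is `div (f • θ)` for scalar `f`.
-/

open Filter Set Module
open scoped Topology NNReal

section Divergence

variable {E : Type*} [NormedAddCommGroup E] [NormedSpace ℝ E]

/-- The divergence of a vector field on a normed space, as the trace of its Fréchet derivative. It
is `0` where the field is not differentiable, and on infinite-dimensional spaces. -/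
noncomputable def divergence (v : E → E) (x : E) : ℝ :=
  LinearMap.trace ℝ E (fderiv ℝ v x)

theorem divergence_smul [FiniteDimensional ℝ E] {f : E → ℝ} {v : E → E} {x : E}
    (hf : DifferentiableAt ℝ f x) (hv : DifferentiableAt ℝ v x) :
    divergence (fun y => f y • v y) x = divergence v x * f x + fderiv ℝ f x (v x) := by
  simp [divergence, fderiv_fun_smul hf hv, LinearMap.trace_smulRight, mul_comm]

theorem divergence_eq_sum_fderiv_single {ι : Type*} [Fintype ι] [DecidableEq ι]
    {v : EuclideanSpace ℝ ι → EuclideanSpace ℝ ι} {x : EuclideanSpace ℝ ι}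
    (hv : DifferentiableAt ℝ v x) :
    divergence v x = ∑ i, fderiv ℝ (fun y => v y i) x (EuclideanSpace.single i 1) := by
  have hcoord (i : ι) : fderiv ℝ (fun y => v y i) x =
      (EuclideanSpace.proj (𝕜 := ℝ) i).comp (fderiv ℝ v x) :=
    ((EuclideanSpace.proj (𝕜 := ℝ) i).hasFDerivAt.comp x hv.hasFDerivAt).fderiv
  rw [divergence, LinearMap.trace_eq_sum_inner _ (EuclideanSpace.basisFun ι ℝ)]
  simp [hcoord, EuclideanSpace.inner_single_left]

theorem sum_fderiv_mul_single {ι : Type*} [Fintype ι] [DecidableEq ι]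
    {f : EuclideanSpace ℝ ι → ℝ} {v : EuclideanSpace ℝ ι → EuclideanSpace ℝ ι}
    {x : EuclideanSpace ℝ ι} (hf : DifferentiableAt ℝ f x) (hv : DifferentiableAt ℝ v x) :
    ∑ i, fderiv ℝ (fun y => f y * v y i) x (EuclideanSpace.single i 1) =
      divergence v x • f x + fderiv ℝ f x (v x) := by
  rw [smul_eq_mul, ← divergence_smul hf hv, divergence_eq_sum_fderiv_single (hf.fun_smul hv)]
  simp only [PiLp.smul_apply, smul_eq_mul]

end Divergence

section Det

variable {𝕜 E : Type*} [NontriviallyNormedField 𝕜] [NormedAddCommGroup E]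
  [NormedSpace 𝕜 E] [FiniteDimensional 𝕜 E]

theorem contDiff_det [CompleteSpace 𝕜] {n : WithTop ℕ∞} :
    ContDiff 𝕜 n fun A : E →L[𝕜] E => A.det := by
  let b := finBasis 𝕜 E
  have hentry (i j) : ContDiff 𝕜 n fun A : E →L[𝕜] E => LinearMap.toMatrix b b A i j := by
    simp only [LinearMap.toMatrix_apply]
    exact (b.coord i).toContinuousLinearMap.contDiff.comp
      (ContinuousLinearMap.apply 𝕜 E (b j)).contDiff
  simp only [ContinuousLinearMap.det, ← LinearMap.det_toMatrix b, Matrix.det_apply]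
  exact ContDiff.sum fun σ _ => (contDiff_prod fun i _ => hentry (σ i) i).const_smul _

theorem hasDerivAt_det_one_add_smul (A : E →L[𝕜] E) :
    HasDerivAt (fun t : 𝕜 => (1 + t • A).det) (LinearMap.trace 𝕜 E A) 0 := by
  let M := LinearMap.toMatrix (finBasis 𝕜 E) (finBasis 𝕜 E) A
  have hdet (t : 𝕜) : (1 + t • A).det = (1 + t • M).det := by
    simp [ContinuousLinearMap.det, ← LinearMap.det_toMatrix (finBasis 𝕜 E), M,
      LinearMap.toMatrix_one]
  have htrace : LinearMap.trace 𝕜 E A = M.trace := LinearMap.trace_eq_matrix_trace 𝕜 _ _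
  have hlin : HasDerivAt (fun t : 𝕜 => 1 + M.trace * t) M.trace 0 := by
    simpa using ((hasDerivAt_id (0 : 𝕜)).const_mul M.trace).const_add 1
  have hquad (q : Polynomial 𝕜) : HasDerivAt (fun t => q.eval t * t ^ 2) 0 0 := by
    simpa using (q.hasDerivAt 0).fun_mul ((hasDerivAt_id (0 : 𝕜)).fun_pow 2)
  rw [htrace, funext fun t => (hdet t).trans (Matrix.det_one_add_smul t M)]
  simpa using hlin.fun_add (hquad _)

end Det

theorem eventually_forall_det_one_add_smul_pos {E : Type*} [NormedAddCommGroup E]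
    [NormedSpace ℝ E] [FiniteDimensional ℝ E] {K : Set (E →L[ℝ] E)} (hK : IsCompact K) :
    ∀ᶠ t : ℝ in 𝓝 0, ∀ A ∈ K, 0 < (1 + t • A).det := by
  refine hK.eventually_forall_of_forall_eventually fun A _ => ?_
  have hcont : Continuous fun p : ℝ × (E →L[ℝ] E) => (1 + p.1 • p.2).det :=
    ContinuousLinearMap.continuous_det.comp (by fun_prop)
  exact hcont.continuousAt.eventually (lt_mem_nhds (by simp [ContinuousLinearMap.det]))

theorem exists_lipschitzOnWith_of_forall_contDiffAt {𝕜 E F : Type*} [RCLike 𝕜]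
    [NormedAddCommGroup E] [NormedSpace 𝕜 E] [NormedAddCommGroup F] [NormedSpace 𝕜 F]
    {g : E → F} {K : Set E} (hK : IsCompact K) (hg : ∀ x ∈ K, ContDiffAt 𝕜 1 g x) :
    ∃ C, LipschitzOnWith C g K := by
  refine LocallyLipschitzOn.exists_lipschitzOnWith_of_compact hK fun x hx => ?_
  obtain ⟨C, u, hu, hC⟩ := (hg x hx).exists_lipschitzOnWith
  exact ⟨C, u, mem_nhdsWithin_of_mem_nhds hu, hC⟩

theorem eventually_injOn_add_smul {𝕜 E : Type*} [NormedField 𝕜]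
    [NormedAddCommGroup E] [NormedSpace 𝕜 E] {θ : E → E} {s : Set E} {C : ℝ≥0}
    (hθ : LipschitzOnWith C θ s) : ∀ᶠ t : 𝕜 in 𝓝 0, InjOn (fun x => x + t • θ x) s := by
  have hsmall : ∀ᶠ t : 𝕜 in 𝓝 0, ‖t‖₊ * C < 1 :=
    (by fun_prop : Continuous fun t : 𝕜 => ‖t‖₊ * C).continuousAt.eventually
      (gt_mem_nhds (by simp))
  filter_upwards [hsmall] with t ht
  have hid : AntilipschitzWith 1 (s.domRestrict (id : E → E)) := AntilipschitzWith.id.domRestrict s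
  have hpert : LipschitzWith (‖t‖₊ * C) (s.domRestrict fun x => t • θ x) :=
    (lipschitzWith_smul t).comp hθ.to_restrict
  exact injOn_iff_injective.2 (hid.add_lipschitzWith hpert (by simpa using ht)).injective

theorem exists_eventually_forall_contDiffAt_and_norm_fderiv_lt {𝕜 T P G : Type*}
    [NontriviallyNormedField 𝕜] [NormedAddCommGroup T] [NormedSpace 𝕜 T]
    [NormedAddCommGroup P] [NormedSpace 𝕜 P] [NormedAddCommGroup G] [NormedSpace 𝕜 G]
    {Ψ : T × P → G} {t₀ : T} {K : Set P} (hK : IsCompact K)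
    (hΨ : ∀ y ∈ K, ContDiffAt 𝕜 1 Ψ (t₀, y)) :
    ∃ C, ∀ᶠ t in 𝓝 t₀, ∀ y ∈ K, ContDiffAt 𝕜 1 Ψ (t, y) ∧ ‖fderiv 𝕜 Ψ (t, y)‖ < C := by
  have hcont (y : P) (hy : y ∈ K) : ContinuousAt (fderiv 𝕜 Ψ) (t₀, y) :=
    (hΨ y hy).continuousAt_fderiv one_ne_zero
  obtain ⟨C, hC⟩ : ∃ C, ∀ y ∈ K, ‖fderiv 𝕜 Ψ (t₀, y)‖ ≤ C :=
    hK.exists_bound_of_continuousOn fun y hy =>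
      ((hcont y hy).comp (f := (t₀, ·)) (by fun_prop)).continuousWithinAt
  refine ⟨C + 1, hK.eventually_forall_of_forall_eventually fun y hy => ?_⟩
  exact ((hΨ y hy).eventually (by simp)).and
    ((hcont y hy).norm.eventually (gt_mem_nhds ((hC y hy).trans_lt (lt_add_one C))))

theorem hasDerivAt_setIntegral_comp_of_contDiffAt {X P G : Type*}
    [TopologicalSpace X] [T2Space X] [MeasurableSpace X] [OpensMeasurableSpace X]
    [NormedAddCommGroup P] [NormedSpace ℝ P] [NormedAddCommGroup G] [NormedSpace ℝ G]
    {μ : Measure X} [IsFiniteMeasureOnCompacts μ] {Ω K : Set X} (hΩ : MeasurableSet Ω)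
    (hK : IsCompact K) (hΩK : Ω ⊆ K) {p : X → P} (hp : ContinuousOn p K) {Ψ : ℝ × P → G} {t₀ : ℝ}
    (hΨ : ∀ x ∈ K, ContDiffAt ℝ 1 Ψ (t₀, p x)) :
    HasDerivAt (fun t => ∫ x in Ω, Ψ (t, p x) ∂μ)
      (∫ x in Ω, deriv (fun t => Ψ (t, p x)) t₀ ∂μ) t₀ := by
  obtain ⟨C, hC⟩ := exists_eventually_forall_contDiffAt_and_norm_fderiv_lt
    (hK.image_of_continuousOn hp) (forall_mem_image.2 hΨ)
  simp only [forall_mem_image] at hC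
  have hderiv {t : ℝ} {x : X} (h : ContDiffAt ℝ 1 Ψ (t, p x)) :
      HasDerivAt (fun s => Ψ (s, p x)) (fderiv ℝ Ψ (t, p x) (1, 0)) t :=
    (h.differentiableAt one_ne_zero).hasFDerivAt.comp_hasDerivAt t
      ((hasDerivAt_id t).prodMk (hasDerivAt_const t (p x)))
  have hbound {t : ℝ} {x : X} (h : ‖fderiv ℝ Ψ (t, p x)‖ < C) :
      ‖fderiv ℝ Ψ (t, p x) (1, 0)‖ ≤ C :=
    (ContinuousLinearMap.le_of_opNorm_le _ h.le _).trans_eq (by simp)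
  have hint {t : ℝ} {g : ℝ × P → G} (hg : ∀ x ∈ K, ContinuousAt g (t, p x)) :
      IntegrableOn (fun x => g (t, p x)) Ω μ :=
    (ContinuousOn.integrableOn_compact hK fun x hx =>
      (hg x hx).comp_continuousWithinAt (f := fun x => (t, p x))
        (continuousWithinAt_const.prodMk (hp x hx))).mono_set hΩK
  have hΨint {t : ℝ} (h : ∀ x ∈ K, ContDiffAt ℝ 1 Ψ (t, p x)) :
      IntegrableOn (fun x => Ψ (t, p x)) Ω μ := hint fun x hx => (h x hx).continuousAt
  have hΨ'int : IntegrableOn (fun x => fderiv ℝ Ψ (t₀, p x) (1, 0)) Ω μ :=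
    hint (g := fun q => fderiv ℝ Ψ q (1, 0)) fun x hx =>
      ((hΨ x hx).continuousAt_fderiv one_ne_zero).clm_apply continuousAt_const
  have hCint : IntegrableOn (fun _ : X => C) Ω μ :=
    integrableOn_const ((measure_mono hΩK).trans_lt hK.measure_lt_top).ne
  rw [setIntegral_congr_fun hΩ fun x hx => (hderiv (hΨ x (hΩK hx))).deriv]
  exact (hasDerivAt_integral_of_dominated_loc_of_deriv_le hC
    (hC.mono fun t ht => (hΨint fun x hx => (ht hx).1).aestronglyMeasurable)
    (hΨint hΨ) hΨ'int.aestronglyMeasurable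
    ((ae_restrict_mem hΩ).mono fun x hx t ht => hbound (ht (hΩK hx)).2) hCint
    ((ae_restrict_mem hΩ).mono fun x hx t ht => hderiv (ht (hΩK hx)).1)).2

section ShapeDerivative

variable {E F : Type*} [NormedAddCommGroup E] [NormedSpace ℝ E] [FiniteDimensional ℝ E]
  [NormedAddCommGroup F] [NormedSpace ℝ F]

theorem contDiffAt_det_one_add_smul_smul_comp {f : E → F} {t : ℝ} {x v : E} {A : E →L[ℝ] E}
    (hf : ContDiffAt ℝ 1 f (x + t • v)) :
    ContDiffAt ℝ 1 (fun q : ℝ × E × E × (E →L[ℝ] E) =>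
      (1 + q.1 • q.2.2.2).det • f (q.2.1 + q.1 • q.2.2.1)) (t, x, v, A) := by
  have hdet : ContDiff ℝ 1 fun q : ℝ × E × E × (E →L[ℝ] E) => (1 + q.1 • q.2.2.2).det :=
    contDiff_det.comp (by fun_prop)
  have hmove : ContDiff ℝ 1 fun q : ℝ × E × E × (E →L[ℝ] E) => q.2.1 + q.1 • q.2.2.1 := by fun_prop
  exact hdet.contDiffAt.smul (hf.comp (t, x, v, A) hmove.contDiffAt)

theorem hasDerivAt_det_one_add_smul_smul_comp {f : E → F} {x : E} (hf : DifferentiableAt ℝ f x)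
    (v : E) (A : E →L[ℝ] E) :
    HasDerivAt (fun t : ℝ => (1 + t • A).det • f (x + t • v))
      (LinearMap.trace ℝ E A • f x + fderiv ℝ f x v) 0 := by
  have hline : HasDerivAt (fun t : ℝ => x + t • v) v 0 := by
    simpa using ((hasDerivAt_id (0 : ℝ)).smul_const v).const_add x
  have hfline : HasDerivAt (fun t : ℝ => f (x + t • v)) (fderiv ℝ f x v) 0 :=
    hf.hasFDerivAt.comp_hasDerivAt_of_eq 0 hline (by simp)
  simpa [ContinuousLinearMap.det, add_comm] using (hasDerivAt_det_one_add_smul A).fun_smul hfline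

variable [MeasurableSpace E] [BorelSpace E] {Ω : Set E} {θ : E → E}

theorem eventually_setIntegral_image_add_smul (μ : Measure E) [μ.IsAddHaarMeasure]
    (hΩ : MeasurableSet Ω) (hΩb : Bornology.IsBounded Ω)
    (hθ : ∀ x ∈ closure Ω, ContDiffAt ℝ 1 θ x) (f : E → F) :
    ∀ᶠ t : ℝ in 𝓝 0, ∫ x in (fun x => x + t • θ x) '' Ω, f x ∂μ =
      ∫ x in Ω, (1 + t • fderiv ℝ θ x).det • f (x + t • θ x) ∂μ := by
  have hK : IsCompact (closure Ω) := hΩb.isCompact_closure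
  obtain ⟨C, hC⟩ := exists_lipschitzOnWith_of_forall_contDiffAt hK hθ
  have hDθ : ContinuousOn (fderiv ℝ θ) (closure Ω) := fun x hx =>
    ((hθ x hx).continuousAt_fderiv one_ne_zero).continuousWithinAt
  filter_upwards [eventually_injOn_add_smul (𝕜 := ℝ) (hC.mono subset_closure),
    eventually_forall_det_one_add_smul_pos (hK.image_of_continuousOn hDθ)] with t hinj hpos
  have hfderiv (x : E) (hx : x ∈ Ω) :
      HasFDerivWithinAt (fun x => x + t • θ x) (1 + t • fderiv ℝ θ x) Ω x :=
    have hθx := ((hθ x (subset_closure hx)).differentiableAt one_ne_zero).hasFDerivAt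
    ((hasFDerivAt_id x).add (hθx.const_smul t)).hasFDerivWithinAt
  rw [integral_image_eq_integral_abs_det_fderiv_smul μ hΩ hfderiv hinj]
  refine setIntegral_congr_fun hΩ fun x hx => ?_
  simp only [abs_of_pos (hpos _ (mem_image_of_mem _ (subset_closure hx)))]

/- The integrand of the derivative is the divergence of the tensor field `f ⊗ θ`. -/
theorem shape_derivative_volume_integral_general [CompleteSpace F]
    (μ : Measure E) [μ.IsAddHaarMeasure]
    (hΩ : MeasurableSet Ω) (hΩb : Bornology.IsBounded Ω) {f : E → F}
    (hf : ∀ x ∈ closure Ω, ContDiffAt ℝ 1 f x) (hθ : ∀ x ∈ closure Ω, ContDiffAt ℝ 1 θ x) :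
    HasDerivAt (fun t : ℝ => ∫ x in (fun x => x + t • θ x) '' Ω, f x ∂μ)
      (∫ x in Ω, (divergence θ x • f x + fderiv ℝ f x (θ x)) ∂μ) 0 := by
  have hdata : ContinuousOn (fun x => (x, θ x, fderiv ℝ θ x)) (closure Ω) := fun x hx =>
    (continuousAt_id.prodMk ((hθ x hx).continuousAt.prodMk
      ((hθ x hx).continuousAt_fderiv one_ne_zero))).continuousWithinAt
  have hpullback := hasDerivAt_setIntegral_comp_of_contDiffAt (μ := μ) hΩ hΩb.isCompact_closure
    subset_closure hdata fun x hx => contDiffAt_det_one_add_smul_smul_comp (t := 0)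
      (by simpa using hf x hx)
  rw [setIntegral_congr_fun hΩ fun x hx => (hasDerivAt_det_one_add_smul_smul_comp
    ((hf x (subset_closure hx)).differentiableAt one_ne_zero) (θ x) (fderiv ℝ θ x)).deriv]
    at hpullback
  exact hpullback.congr_of_eventuallyEq (eventually_setIntegral_image_add_smul μ hΩ hΩb hθ f)

end ShapeDerivative

/-- Shape derivative of a volume integral: for `J(Ω) = ∫_Ω f`, the map
`t ↦ J(Φ_t(Ω))` with `Φ_t(x) = x + t • θ(x)` is differentiable at `t = 0`
with derivative `∫_Ω div (f • θ)`. -/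
theorem shape_derivative_volume_integral
    (d : ℕ) (Ω : Set (EuclideanSpace ℝ (Fin d)))
    (hΩmeas : MeasurableSet Ω) (hΩbdd : Bornology.IsBounded Ω)
    (f : EuclideanSpace ℝ (Fin d) → ℝ)
    (hf : ContDiff ℝ 1 f) (hfsupp : HasCompactSupport f)
    (θ : EuclideanSpace ℝ (Fin d) → EuclideanSpace ℝ (Fin d))
    (hθ : ContDiff ℝ 1 θ) (hθsupp : HasCompactSupport θ) :
    HasDerivAt (fun t : ℝ => ∫ x in (fun x => x + t • θ x) '' Ω, f x)
      (∫ x in Ω,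
        ∑ i : Fin d, fderiv ℝ (fun y => f y * θ y i) x (EuclideanSpace.single i 1)) 0 := by
  simpa only [← sum_fderiv_mul_single (hf.differentiable one_ne_zero _)
    (hθ.differentiable one_ne_zero _)] using shape_derivative_volume_integral_general volume
      hΩmeas hΩbdd (fun _ _ => hf.contDiffAt) (fun _ _ => hθ.contDiffAt)
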